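/- Suppose the quadratic form f(x) = xᵀAx is given by a nonzero symmetric k×k matrix A, and suppose that Σ is a positive definite k×k matrix such that all eigenvalues of AΣ are nonnegative. Then W_{f,Σ} stochastically dominates (1/4)·χ²₁, i.e., W_{f,Σ} ≥_st (1/4)·χ²₁. -/

import Mathlib

open MeasureTheory ProbabilityTheory Matrix MvPolynomial Real

noncomputable section

/-- The distribution of a vector of independent standard normal random variables. -/
def stdGaussian (ι : Type*) [Fintype ι] : Measure (ι → ℝ) :=
  Measure.pi fun _ => gaussianReal 0 1

/-- `μ` is the distribution of a centered Gaussian random vector with covariance matrix `S`,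
i.e. `μ` is the law of `A Z` for a vector `Z` of i.i.d. standard normals with `A Aᵀ = S`. -/
def IsCenteredGaussian {ι : Type*} [Fintype ι] (μ : Measure (ι → ℝ))
    (S : Matrix ι ι ℝ) : Prop :=
  ∃ A : Matrix ι ι ℝ, A * Aᵀ = S ∧ μ = (stdGaussian ι).map A.mulVec

/-- The gradient of a polynomial. -/
def polyGrad {ι : Type*} [Fintype ι] (f : MvPolynomial ι ℝ) (x : ι → ℝ) : ι → ℝ :=
  fun i => eval x (pderiv i f)

/-- The Wald ratio `W_{f,S}(x) = f(x)² / (∇f(x)ᵀ S ∇f(x))`. -/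
def waldRV {ι : Type*} [Fintype ι] (f : MvPolynomial ι ℝ) (S : Matrix ι ι ℝ)
    (x : ι → ℝ) : ℝ :=
  (eval x f) ^ 2 / (polyGrad f x ⬝ᵥ S.mulVec (polyGrad f x))

/-- The chi-square distribution with `k` degrees of freedom. -/
def chiSq (k : ℕ) : Measure ℝ :=
  (stdGaussian (Fin k)).map fun z => ∑ i, (z i) ^ 2

/-- The quadratic form `x ↦ xᵀ A x` as a polynomial. -/
def quadFormPoly {ι : Type*} [Fintype ι] (A : Matrix ι ι ℝ) : MvPolynomial ι ℝ :=
  ∑ i, ∑ j, C (A i j) * X i * X j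

/-!
Let `X = B Z` with `Z` standard normal and `B Bᵀ = Σ`. The Wald ratio of `A` at `X` is the Wald
ratio of `M = Bᵀ A B` at `Z` for the identity covariance, that is `(zᵀ M z)² / (4 |M z|²)`. Apart
from `0`, the matrices `M` and `A Σ` have the same eigenvalues, so `M` is positive semidefinite.
In coordinates `uᵢ` along an orthonormal eigenbasis, with eigenvalues `lᵢ ≥ 0` of which `lₘ > 0` is
the largest,
`uₘ² · ∑ lᵢ² uᵢ² ≤ lₘ uₘ² · ∑ lᵢ uᵢ² ≤ (∑ lᵢ uᵢ²)²`,
so the Wald ratio is bounded below, pointwise, by `uₘ² / 4`, and `uₘ` is standard normal.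
-/

variable {ι κ : Type*} [Fintype ι] [Fintype κ]

theorem eval_quadFormPoly (A : Matrix ι ι ℝ) (x : ι → ℝ) :
    eval x (quadFormPoly A) = x ⬝ᵥ A *ᵥ x := by
  simp only [quadFormPoly, map_sum, map_mul, eval_C, eval_X, dotProduct, mulVec, Finset.mul_sum]
  exact Finset.sum_congr rfl fun i _ => Finset.sum_congr rfl fun j _ => by ring

theorem polyGrad_quadFormPoly (A : Matrix ι ι ℝ) (x : ι → ℝ) :
    polyGrad (quadFormPoly A) x = (A + Aᵀ) *ᵥ x := by
  classical
  ext l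
  have eval_pderiv_term (i j : ι) : eval x (pderiv l (C (A i j) * X i * X j)) =
      (if i = l then A i j * x j else 0) + (if j = l then A i j * x i else 0) := by
    simp only [Derivation.leibniz, pderiv_C, pderiv_X, smul_eq_mul, map_add, map_mul, eval_C,
      eval_X, mul_zero, add_zero, Pi.single_apply]
    split_ifs <;> simp <;> ring
  have sum_left : ∑ i, ∑ j, (if i = l then A i j * x j else 0) = (A *ᵥ x) l := by
    rw [Finset.sum_comm]
    simp [mulVec, dotProduct]
  have sum_right : ∑ i, ∑ j, (if j = l then A i j * x i else 0) = (Aᵀ *ᵥ x) l := by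
    simp [mulVec, dotProduct]
  simp only [polyGrad, quadFormPoly, map_sum, eval_pderiv_term, Finset.sum_add_distrib, sum_left,
    sum_right, add_mulVec, Pi.add_apply]

theorem waldRV_quadFormPoly_mulVec [DecidableEq κ] (A : Matrix ι ι ℝ) (B : Matrix ι κ ℝ)
    (z : κ → ℝ) :
    waldRV (quadFormPoly A) (B * Bᵀ) (B *ᵥ z) = waldRV (quadFormPoly (Bᵀ * A * B)) 1 z := by
  have form : B *ᵥ z ⬝ᵥ A *ᵥ B *ᵥ z = z ⬝ᵥ (Bᵀ * A * B) *ᵥ z := by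
    simp only [← mulVec_mulVec, dotProduct_mulVec, vecMul_transpose]
  have grad : Bᵀ *ᵥ (A + Aᵀ) *ᵥ B *ᵥ z = (Bᵀ * A * B + (Bᵀ * A * B)ᵀ) *ᵥ z := by
    simp only [transpose_mul, transpose_transpose, mulVec_mulVec, Matrix.add_mul, Matrix.mul_add,
      Matrix.mul_assoc]
  have cov (y : ι → ℝ) : y ⬝ᵥ (B * Bᵀ) *ᵥ y = Bᵀ *ᵥ y ⬝ᵥ Bᵀ *ᵥ y := by
    rw [← mulVec_mulVec, dotProduct_mulVec, ← mulVec_transpose]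
  rw [waldRV, waldRV, eval_quadFormPoly, eval_quadFormPoly, polyGrad_quadFormPoly,
    polyGrad_quadFormPoly, form, cov, grad, one_mulVec]

theorem waldRV_quadFormPoly_one [DecidableEq ι] {M : Matrix ι ι ℝ} (hM : M.IsSymm) (z : ι → ℝ) :
    waldRV (quadFormPoly M) 1 z = 1 / 4 * ((z ⬝ᵥ M *ᵥ z) ^ 2 / (M *ᵥ z ⬝ᵥ M *ᵥ z)) := by
  rw [waldRV, eval_quadFormPoly, polyGrad_quadFormPoly, hM.eq, one_mulVec, ← two_smul ℝ M,
    smul_mulVec, smul_dotProduct, dotProduct_smul, smul_eq_mul, smul_eq_mul, div_mul_div_comm,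
    one_mul]
  congr 1
  ring

theorem measurable_waldRV (f : MvPolynomial ι ℝ) (S : Matrix ι ι ℝ) :
    Measurable (waldRV f S) := by
  have grad : Continuous (polyGrad f) := continuous_pi fun i => continuous_eval (pderiv i f)
  exact ((continuous_eval f).measurable.pow_const 2).div
    (grad.dotProduct (continuous_const.matrix_mulVec grad)).measurable

theorem le_sq_sum_mul_div_sum_sq_mul {α K : Type*} [Field K] [LinearOrder K]
    [IsStrictOrderedRing K] {s : Finset α} {l w : α → K} (hl : ∀ i ∈ s, 0 ≤ l i)
    (hw : ∀ i ∈ s, 0 ≤ w i) {m : α} (hm : m ∈ s) (hmax : ∀ i ∈ s, l i ≤ l m) (hpos : 0 < l m) :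
    w m ≤ (∑ i ∈ s, l i * w i) ^ 2 / ∑ i ∈ s, l i ^ 2 * w i := by
  have hP : ∀ i ∈ s, 0 ≤ l i * w i := fun i hi => mul_nonneg (hl i hi) (hw i hi)
  have hQ : ∀ i ∈ s, 0 ≤ l i ^ 2 * w i := fun i hi => mul_nonneg (sq_nonneg _) (hw i hi)
  -- The denominator can only vanish if `w m = 0`, and then the junk value `0` of the quotient is
  -- still an upper bound.
  rcases (hw m hm).eq_or_lt with hwm | hwm
  · rw [← hwm]
    exact div_nonneg (sq_nonneg _) (Finset.sum_nonneg hQ)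
  · have sum_pos : 0 < ∑ i ∈ s, l i ^ 2 * w i :=
      Finset.sum_pos' hQ ⟨m, hm, by positivity⟩
    have sum_sq_le : ∑ i ∈ s, l i ^ 2 * w i ≤ l m * ∑ i ∈ s, l i * w i := by
      rw [Finset.mul_sum]
      refine Finset.sum_le_sum fun i hi => ?_
      rw [sq, mul_assoc]
      exact mul_le_mul_of_nonneg_right (hmax i hi) (hP i hi)
    rw [le_div_iff₀ sum_pos]
    calc w m * ∑ i ∈ s, l i ^ 2 * w i
        ≤ w m * (l m * ∑ i ∈ s, l i * w i) := mul_le_mul_of_nonneg_left sum_sq_le hwm.le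
      _ = l m * w m * ∑ i ∈ s, l i * w i := by ring
      _ ≤ (∑ i ∈ s, l i * w i) * ∑ i ∈ s, l i * w i :=
        mul_le_mul_of_nonneg_right (Finset.single_le_sum hP hm) (Finset.sum_nonneg hP)
      _ = (∑ i ∈ s, l i * w i) ^ 2 := (sq _).symm

theorem sum_dotProduct_mul_dotProduct (b : OrthonormalBasis κ ℝ (EuclideanSpace ℝ ι))
    (x y : ι → ℝ) : ∑ j, (⇑(b j) ⬝ᵥ x) * (⇑(b j) ⬝ᵥ y) = x ⬝ᵥ y := by
  have h := b.sum_inner_mul_inner (WithLp.toLp 2 x) (WithLp.toLp 2 y)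
  simp only [EuclideanSpace.inner_eq_star_dotProduct, star_trivial] at h
  rw [dotProduct_comm x y, ← h]
  exact Finset.sum_congr rfl fun j _ => by rw [dotProduct_comm y]

section Hermitian

variable [DecidableEq ι] {M : Matrix ι ι ℝ}

theorem eigenvectorBasis_dotProduct_mulVec (hM : M.IsHermitian) (i : ι) (z : ι → ℝ) :
    ⇑(hM.eigenvectorBasis i) ⬝ᵥ M *ᵥ z =
      hM.eigenvalues i * (⇑(hM.eigenvectorBasis i) ⬝ᵥ z) := by
  rw [dotProduct_mulVec, ← mulVec_transpose, ← conjTranspose_eq_transpose_of_trivial, hM.eq,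
    hM.mulVec_eigenvectorBasis, smul_dotProduct, smul_eq_mul]

theorem dotProduct_mulVec_eq_sum_eigenvalues (hM : M.IsHermitian) (z : ι → ℝ) :
    z ⬝ᵥ M *ᵥ z = ∑ i, hM.eigenvalues i * (⇑(hM.eigenvectorBasis i) ⬝ᵥ z) ^ 2 := by
  rw [← sum_dotProduct_mul_dotProduct hM.eigenvectorBasis]
  exact Finset.sum_congr rfl fun i _ => by rw [eigenvectorBasis_dotProduct_mulVec]; ring

theorem mulVec_dotProduct_mulVec_eq_sum_eigenvalues (hM : M.IsHermitian) (z : ι → ℝ) :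
    M *ᵥ z ⬝ᵥ M *ᵥ z = ∑ i, hM.eigenvalues i ^ 2 * (⇑(hM.eigenvectorBasis i) ⬝ᵥ z) ^ 2 := by
  rw [← sum_dotProduct_mul_dotProduct hM.eigenvectorBasis]
  exact Finset.sum_congr rfl fun i _ => by rw [eigenvectorBasis_dotProduct_mulVec]; ring

theorem exists_forall_eigenvalues_le_of_posSemidef (hM : M.PosSemidef) (hM0 : M ≠ 0) :
    ∃ m, 0 < hM.isHermitian.eigenvalues m ∧
      ∀ i, hM.isHermitian.eigenvalues i ≤ hM.isHermitian.eigenvalues m := by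
  obtain ⟨j, hj⟩ : ∃ j, hM.isHermitian.eigenvalues j ≠ 0 :=
    Function.ne_iff.1 fun h => hM0 (hM.isHermitian.eigenvalues_eq_zero_iff.1 h)
  have : Nonempty ι := ⟨j⟩
  obtain ⟨m, hm⟩ := Finite.exists_max hM.isHermitian.eigenvalues
  exact ⟨m, ((hM.eigenvalues_nonneg j).lt_of_ne' hj).trans_le (hm j), hm⟩

theorem exists_unit_forall_sq_dotProduct_le_waldRV (hM : M.PosSemidef) (hM0 : M ≠ 0) :
    ∃ v : ι → ℝ, v ⬝ᵥ v = 1 ∧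
      ∀ z, 1 / 4 * (v ⬝ᵥ z) ^ 2 ≤ waldRV (quadFormPoly M) 1 z := by
  obtain ⟨m, hpos, hmax⟩ := exists_forall_eigenvalues_le_of_posSemidef hM hM0
  have hH := hM.isHermitian
  refine ⟨hH.eigenvectorBasis m, ?_, fun z => ?_⟩
  · simpa only [EuclideanSpace.inner_eq_star_dotProduct, star_trivial] using
      hH.eigenvectorBasis.inner_eq_one m
  · rw [waldRV_quadFormPoly_one (isHermitian_iff_isSymm.1 hH),
      dotProduct_mulVec_eq_sum_eigenvalues hH, mulVec_dotProduct_mulVec_eq_sum_eigenvalues hH]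
    gcongr
    exact le_sq_sum_mul_div_sum_sq_mul (w := fun i => (⇑(hH.eigenvectorBasis i) ⬝ᵥ z) ^ 2)
      (fun i _ => hM.eigenvalues_nonneg i) (fun i _ => sq_nonneg _) (Finset.mem_univ m)
      (fun i _ => hmax i) hpos

theorem posSemidef_transpose_mul_mul_of_spectrum_nonneg {A B : Matrix ι ι ℝ} (hA : A.IsSymm)
    (h : ∀ r ∈ spectrum ℝ (A * (B * Bᵀ)), 0 ≤ r) : (Bᵀ * A * B).PosSemidef := by
  rw [posSemidef_iff_isHermitian_and_spectrum_nonneg]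
  refine ⟨isHermitian_conjTranspose_mul_mul B (isHermitian_iff_isSymm.2 hA), fun r hr => ?_⟩
  rcases eq_or_ne r 0 with rfl | hr0
  · exact le_refl (0 : ℝ)
  · have hr' : r ∈ spectrum ℝ (A * B * Bᵀ) \ {0} := by
      rw [spectrum.nonzero_mul_comm, ← Matrix.mul_assoc]
      exact ⟨hr, hr0⟩
    exact h r (Matrix.mul_assoc A B Bᵀ ▸ hr'.1)

end Hermitian

theorem spectrum_eq_range_of_charpoly_eq_prod {K : Type*} [Field K] [DecidableEq ι]
    {M : Matrix ι ι K} {lam : κ → K}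
    (h : M.charpoly = ∏ i, (Polynomial.X - Polynomial.C (lam i))) :
    spectrum K M = Set.range lam := by
  ext r
  simp [mem_spectrum_iff_isRoot_charpoly, h, Polynomial.eval_prod, Finset.prod_eq_zero_iff,
    sub_eq_zero, eq_comm (a := r)]

theorem map_dotProduct_stdGaussian (v : ι → ℝ) :
    (_root_.stdGaussian ι).map (v ⬝ᵥ ·) = gaussianReal 0 (v ⬝ᵥ v).toNNReal := by
  have h := IsGaussian.map_eq_gaussianReal
    (μ := ProbabilityTheory.stdGaussian (EuclideanSpace ℝ ι)) (innerSL ℝ (WithLp.toLp 2 v))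
  have inner_eq : ⇑(innerSL ℝ (WithLp.toLp 2 v)) ∘ WithLp.toLp 2 = (v ⬝ᵥ ·) := by
    ext z
    simp [EuclideanSpace.inner_eq_star_dotProduct, dotProduct_comm]
  have norm_sq : ‖WithLp.toLp 2 v‖ ^ 2 = v ⬝ᵥ v := by
    rw [← real_inner_self_eq_norm_sq, EuclideanSpace.inner_eq_star_dotProduct, star_trivial]
  rwa [integral_strongDual_stdGaussian, variance_dual_stdGaussian, innerSL_apply_norm, norm_sq,
    ← map_pi_eq_stdGaussian, Measure.map_map (by fun_prop) (by fun_prop), inner_eq] at h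

theorem chiSq_one : chiSq 1 = (gaussianReal 0 1).map (· ^ 2) := by
  have h : (_root_.stdGaussian (Fin 1)).map (Function.eval 0) = gaussianReal 0 1 :=
    (measurePreserving_eval (fun _ : Fin 1 => gaussianReal 0 1) 0).map_eq
  rw [chiSq, ← h, Measure.map_map (by fun_prop) (by fun_prop)]
  congr 1
  ext z
  simp

theorem map_apply_le_map_apply_of_isUpperSet {Ω β : Type*} [MeasurableSpace Ω]
    [MeasurableSpace β] [Preorder β] {μ : Measure Ω} {f g : Ω → β} (hf : AEMeasurable f μ)
    (hg : AEMeasurable g μ) (hfg : f ≤ᵐ[μ] g) {s : Set β} (hs : MeasurableSet s)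
    (hs' : IsUpperSet s) : μ.map f s ≤ μ.map g s := by
  rw [Measure.map_apply_of_aemeasurable hf hs, Measure.map_apply_of_aemeasurable hg hs]
  exact measure_mono_ae (hfg.mono fun _ hω => hs' hω)

/-- `S` may be singular; `S * A * S ≠ 0` says that `xᵀAx` does not vanish identically on the range
of `S`, the support of `μ`. -/
theorem waldRV_quadratic_lower_bound_general [DecidableEq ι] {A S : Matrix ι ι ℝ}
    (hA : A.IsSymm) (hSAS : S * A * S ≠ 0) (hspec : ∀ r ∈ spectrum ℝ (A * S), 0 ≤ r)
    {μ : Measure (ι → ℝ)} (hμ : IsCenteredGaussian μ S) (t : ℝ) :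
    ((chiSq 1).map (fun y => 1 / 4 * y)) (Set.Ioi t) ≤
      μ.map (waldRV (quadFormPoly A) S) (Set.Ioi t) := by
  obtain ⟨B, rfl, rfl⟩ := hμ
  have hM : (Bᵀ * A * B).PosSemidef := posSemidef_transpose_mul_mul_of_spectrum_nonneg hA hspec
  have hM0 : Bᵀ * A * B ≠ 0 := fun h => hSAS <| by
    rw [show B * Bᵀ * A * (B * Bᵀ) = B * (Bᵀ * A * B) * Bᵀ by simp only [Matrix.mul_assoc], h,
      Matrix.mul_zero, Matrix.zero_mul]
  obtain ⟨v, hv, hle⟩ := exists_unit_forall_sq_dotProduct_le_waldRV hM hM0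
  have hlaw : gaussianReal 0 1 = (_root_.stdGaussian ι).map (v ⬝ᵥ ·) := by
    rw [map_dotProduct_stdGaussian, hv, Real.toNNReal_one]
  have hdot : Measurable (v ⬝ᵥ ·) := (continuous_const.dotProduct continuous_id).measurable
  have hB : Measurable B.mulVec := (continuous_const.matrix_mulVec continuous_id).measurable
  rw [chiSq_one, hlaw, Measure.map_map (by fun_prop) hdot,
    Measure.map_map (by fun_prop) (by fun_prop), Measure.map_map (measurable_waldRV _ _) hB]
  refine map_apply_le_map_apply_of_isUpperSet (by fun_prop)
    ((measurable_waldRV _ _).comp hB).aemeasurable (ae_of_all _ fun z => ?_)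
    measurableSet_Ioi (isUpperSet_Ioi t)
  simpa only [Function.comp_apply, waldRV_quadFormPoly_mulVec] using hle z

/-- Suppose the quadratic form `f(x) = xᵀAx` is given by a nonzero symmetric
matrix `A`, and `Σ` is positive definite such that all eigenvalues `λ₁, …, λ_k` of `AΣ`
are nonnegative.  Then `W_{f,Σ} ≥_st (1/4)·χ²₁`. -/
theorem waldRV_quadratic_lower_bound {k : ℕ}
    (A : Matrix (Fin k) (Fin k) ℝ) (hA : A.IsSymm) (hA0 : A ≠ 0)
    (S : Matrix (Fin k) (Fin k) ℝ) (hS : S.PosDef)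
    (lam : Fin k → ℝ)
    (hlam : (A * S).charpoly = ∏ i, (Polynomial.X - Polynomial.C (lam i)))
    (hlam0 : ∀ i, 0 ≤ lam i)
    (μ : Measure (Fin k → ℝ)) (hμ : IsCenteredGaussian μ S) :
    ∀ t : ℝ, ((chiSq 1).map (fun y => 1 / 4 * y)) (Set.Ioi t) ≤
      μ.map (waldRV (quadFormPoly A) S) (Set.Ioi t) := by
  refine waldRV_quadratic_lower_bound_general hA
    (by simpa [hS.isUnit.mul_left_eq_zero, hS.isUnit.mul_right_eq_zero] using hA0) ?_ hμ
  simpa [spectrum_eq_range_of_charpoly_eq_prod hlam] using hlam0
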